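/- arXiv:2407.20869 — 2 statements merged into one kernel-verified Lean document; each statement's English description precedes it below -/
import Mathlib

section
/- Let A, γ, k, η, β be real constants with η ≠ k and fix t ∈ ℝ. Let v₋, v > 0 and w₋, w ∈ ℝ satisfy the 2-contact-discontinuity relation w = w₋ − A v₋^γ e^{k(γ+1)t} + A v^γ e^{k(γ+1)t}. Then λ₂(v,w,t) = λ₂(v₋,w₋,t), and with σ = λ₂(v₋,w₋,t) both components of the Rankine–Hugoniot condition hold: σ·(H(v₋,w₋) − H(v,w)) = G(v₋,w₋) − G(v,w). -/
/-! The flux satisfies `G = λ₂ • H` at every state with `v > 0` (`Gmap_eq_smul`), since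
`v ^ (γ + 1) = v ^ γ * v`. The contact relation says exactly that `w - A v ^ γ e^{k(γ+1)t}`, hence
`λ₂`, takes the same value on both sides, so the jump of `G` is `λ₂` times the jump of `H`. -/

/-- Conserved quantity H(v,w) of the transformed system (case η ≠ k). -/
noncomputable def Hmap (β η k : ℝ) (v w : ℝ) : ℝ × ℝ :=
  (v, v * (w + β / (η - k)))

/-- Flux G(v,w) of the transformed system (case η ≠ k) at time t. -/
noncomputable def Gmap (A γ k η β t : ℝ) (v w : ℝ) : ℝ × ℝ :=
  (v * Real.exp ((η - k) * t) * (w + β / (η - k)) - v * β / (η - k)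
      - A * v ^ (γ + 1) * Real.exp (k * (γ + 1) * t) * Real.exp ((η - k) * t),
    v * (w + β / (η - k)) ^ (2 : ℕ) * Real.exp ((η - k) * t)
      - (w + β / (η - k)) * Real.exp ((η - k) * t) * A * v ^ (γ + 1)
          * Real.exp (k * (γ + 1) * t)
      - (β / (η - k)) * (w + β / (η - k)) * v)

/-- Characteristic speed λ₂ of the transformed Keyfitz–Kranzer system (case η ≠ k). -/
noncomputable def lambda2 (A γ k η β : ℝ) (v w t : ℝ) : ℝ :=
  -β / (η - k) +
    (w + β / (η - k) - A * v ^ γ * Real.exp (k * (γ + 1) * t)) *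
      Real.exp ((η - k) * t)

theorem Gmap_eq_smul (A γ k η β t : ℝ) {v : ℝ} (hv : 0 < v) (w : ℝ) :
    Gmap A γ k η β t v w = lambda2 A γ k η β v w t • Hmap β η k v w := by
  have hpow : v ^ (γ + 1) = v ^ γ * v := by rw [Real.rpow_add hv, Real.rpow_one]
  simp only [Gmap, lambda2, Hmap, hpow, Prod.smul_mk, smul_eq_mul, Prod.mk.injEq]
  constructor <;> ring

/-- along the 2-contact-discontinuity relation, λ₂ is constant and, with
σ = λ₂(v₋,w₋,t), both components of the Rankine–Hugoniot condition hold. -/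
theorem contact_discontinuity_rankine_hugoniot
    (A γ k η β t : ℝ) (hηk : η ≠ k)
    (vm v : ℝ) (hvm : 0 < vm) (hv : 0 < v) (wm w : ℝ)
    (hcontact : w = wm - A * vm ^ γ * Real.exp (k * (γ + 1) * t)
      + A * v ^ γ * Real.exp (k * (γ + 1) * t)) :
    lambda2 A γ k η β v w t = lambda2 A γ k η β vm wm t ∧
    lambda2 A γ k η β vm wm t • (Hmap β η k vm wm - Hmap β η k v w) =
      Gmap A γ k η β t vm wm - Gmap A γ k η β t v w := by
  have hspeed : lambda2 A γ k η β v w t = lambda2 A γ k η β vm wm t := by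
    rw [lambda2, lambda2, hcontact]
    ring
  refine ⟨hspeed, ?_⟩
  rw [Gmap_eq_smul A γ k η β t hvm, Gmap_eq_smul A γ k η β t hv, hspeed, smul_sub]
end

section
/- Let A, γ, k, η, β be real constants with η ≠ k and fix t ∈ ℝ. Let v₋, v > 0 with v ≠ v₋, let w₋ ∈ ℝ, and set w = w₋ (the 1-shock relation) and σ₁ = (w₋ + β/(η−k))e^{(η−k)t} − β/(η−k) − A e^{(η−k)t} e^{k(γ+1)t} (v^{γ+1} − v₋^{γ+1})/(v − v₋). Then both components of the Rankine–Hugoniot condition hold: σ₁·(H(v₋,w₋) − H(v,w₋)) = G(v₋,w₋) − G(v,w₋). -/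
/-- for a 1-shock (w = w₋) with speed σ₁, both components of the
Rankine–Hugoniot condition hold: σ₁·(H(v₋,w₋) − H(v,w₋)) = G(v₋,w₋) − G(v,w₋). -/
theorem one_shock_rankine_hugoniot
    (A γ k η β t : ℝ) (hηk : η ≠ k)
    (vm v : ℝ) (hvm : 0 < vm) (hv : 0 < v) (hne : v ≠ vm) (wm : ℝ)
    (σ₁ : ℝ)
    (hσ : σ₁ = (wm + β / (η - k)) * Real.exp ((η - k) * t) - β / (η - k)
      - A * Real.exp ((η - k) * t) * Real.exp (k * (γ + 1) * t) *
          ((v ^ (γ + 1) - vm ^ (γ + 1)) / (v - vm))) :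
    σ₁ • (Hmap β η k vm wm - Hmap β η k v wm) =
      Gmap A γ k η β t vm wm - Gmap A γ k η β t v wm := by
  have hq : (v ^ (γ + 1) - vm ^ (γ + 1)) / (v - vm) * (v - vm) = v ^ (γ + 1) - vm ^ (γ + 1) :=
    div_mul_cancel₀ _ (sub_ne_zero.mpr hne)
  subst hσ
  -- Hide the difference quotient, so that `hq` is its only property available to `ring`.
  generalize (v ^ (γ + 1) - vm ^ (γ + 1)) / (v - vm) = q at hq ⊢
  -- Along `w = wm` the second component is the first multiplied by `wm + β / (η - k)`.
  ext
  · simp only [Hmap, Gmap, Prod.smul_fst, Prod.fst_sub, smul_eq_mul]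
    linear_combination A * Real.exp ((η - k) * t) * Real.exp (k * (γ + 1) * t) * hq
  · simp only [Hmap, Gmap, Prod.smul_snd, Prod.snd_sub, smul_eq_mul]
    linear_combination (wm + β / (η - k)) *
      (A * Real.exp ((η - k) * t) * Real.exp (k * (γ + 1) * t)) * hq
end
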